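/- Let p, q ≥ 1 and let G be the Hsu-Clique-chain on vertex set Fin q × Fin p, in which distinct (i, j) and (i', j') are adjacent if and only if i = i', or (i' = i + 1 and j ≤ j'), or (i = i' + 1 and j' ≤ j). Order the vertices lexicographically: (i, j) ≤ (i', j') iff i < i' or (i = i' and j ≤ j'). Then for every initial segment A of this order, every nonempty subset X ⊆ A has a subset R ⊆ X with |R| ≤ 2 and N(X) ∩ (V(G) ∖ A) = N(R) ∩ (V(G) ∖ A); consequently the cut-neighbourhood family of A has at most 1 + |A| + |A|(|A|−1)/2 elements. (Together with the rank lower bound, this exhibits unit interval graphs whose boolean-width is O(log n) while their rank-width is Ω(√n).) -/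

import Mathlib

/-- `nbhds G X` is `N(X)`, the union of the open neighbourhoods of the vertices of `X`. -/
def nbhds {V : Type*} (G : SimpleGraph V) (X : Set V) : Set V :=
  {v | ∃ x ∈ X, G.Adj x v}

/-- The cut-neighbourhood family of `A`: `{N(X) ∩ (V ∖ A) : X ⊆ A}`. -/
def cutNbhdFamily {V : Type*} (G : SimpleGraph V) (A : Set V) : Set (Set V) :=
  {S | ∃ X ⊆ A, S = nbhds G X ∩ Aᶜ}

/-- Lexicographic order on `Fin q × Fin p`. -/
def lexLe {q p : ℕ} (u v : Fin q × Fin p) : Prop :=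
  (u.1 : ℕ) < (v.1 : ℕ) ∨ (u.1 = v.1 ∧ (u.2 : ℕ) ≤ (v.2 : ℕ))

/-!
Let `A` be an initial segment. A vertex outside `A` lies above all of `A`, so a vertex of `A` meets
it only in its own clique or in the next one. Hence going to a later clique, or to a smaller
position in the same clique, can only enlarge the neighbourhood outside `A`. These neighbourhoods
therefore form a chain, so their union over a nonempty `X ⊆ A` is attained at a vertex of `X`.
-/

section NestedCut

variable {V : Type*} {G : SimpleGraph V} {A X : Set V}

theorem nbhds_empty : nbhds G ∅ = ∅ := by
  simp [nbhds]

theorem nbhds_mono {Y : Set V} (hXY : X ⊆ Y) : nbhds G X ⊆ nbhds G Y :=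
  fun _ ⟨x, hx, hadj⟩ => ⟨x, hXY hx, hadj⟩

theorem mem_nbhds_singleton {u w : V} : w ∈ nbhds G {u} ↔ G.Adj u w := by
  simp [nbhds]

/-- `NestedCut G A` says that the bipartite graph between `A` and its complement is a chain graph:
of any two vertices of `A`, one sees outside `A` everything that the other sees there. -/
def NestedCut (G : SimpleGraph V) (A : Set V) : Prop :=
  ∀ u ∈ A, ∀ v ∈ A, nbhds G {u} ∩ Aᶜ ⊆ nbhds G {v} ∩ Aᶜ ∨ nbhds G {v} ∩ Aᶜ ⊆ nbhds G {u} ∩ Aᶜ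

theorem NestedCut.exists_nbhds_inter_compl_eq_singleton (h : NestedCut G A) (hXA : X ⊆ A)
    (hfin : X.Finite) (hne : X.Nonempty) :
    ∃ x ∈ X, nbhds G X ∩ Aᶜ = nbhds G {x} ∩ Aᶜ := by
  obtain ⟨x, hx, hmax⟩ := hfin.exists_maximalFor (fun v => nbhds G {v} ∩ Aᶜ) X hne
  have hdom : ∀ u ∈ X, nbhds G {u} ∩ Aᶜ ⊆ nbhds G {x} ∩ Aᶜ := fun u hu =>
    (h u (hXA hu) x (hXA hx)).elim id (hmax hu)
  refine ⟨x, hx, Set.Subset.antisymm ?_ ?_⟩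
  · rintro w ⟨⟨u, hu, hadj⟩, hwA⟩
    exact hdom u hu ⟨mem_nbhds_singleton.2 hadj, hwA⟩
  · exact Set.inter_subset_inter_left _ (nbhds_mono (Set.singleton_subset_iff.2 hx))

theorem NestedCut.cutNbhdFamily_subset (h : NestedCut G A) (hfin : A.Finite) :
    cutNbhdFamily G A ⊆ insert ∅ ((fun v => nbhds G {v} ∩ Aᶜ) '' A) := by
  rintro S ⟨X, hXA, rfl⟩
  rcases X.eq_empty_or_nonempty with rfl | hne
  · left
    rw [nbhds_empty, Set.empty_inter]
  · right
    obtain ⟨x, hx, heq⟩ := h.exists_nbhds_inter_compl_eq_singleton hXA (hfin.subset hXA) hne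
    exact ⟨x, hXA hx, heq.symm⟩

theorem NestedCut.ncard_cutNbhdFamily_le (h : NestedCut G A) (hfin : A.Finite) :
    (cutNbhdFamily G A).ncard ≤ 1 + A.ncard :=
  calc (cutNbhdFamily G A).ncard
      ≤ (insert ∅ ((fun v => nbhds G {v} ∩ Aᶜ) '' A)).ncard :=
        Set.ncard_le_ncard (h.cutNbhdFamily_subset hfin) ((hfin.image _).insert _)
    _ ≤ ((fun v => nbhds G {v} ∩ Aᶜ) '' A).ncard + 1 := Set.ncard_insert_le _ _
    _ ≤ A.ncard + 1 := by gcongr; exact Set.ncard_image_le hfin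
    _ = 1 + A.ncard := add_comm _ _

end NestedCut

/-- The Hsu-Clique-chain with cliques indexed by `ι` and the vertices of each clique by `α`: the
vertex `(i, j)` is the `j`-th vertex of the `i`-th clique, and consecutive cliques are those whose
indices satisfy `i ⋖ i'`. -/
def hsuCliqueChain (ι α : Type*) [LT ι] [LE α] : SimpleGraph (ι × α) :=
  SimpleGraph.fromRel fun u v => u.1 = v.1 ∨ u.1 ⋖ v.1 ∧ u.2 ≤ v.2

namespace hsuCliqueChain

theorem adj_iff_of_lt {ι α : Type*} [Preorder ι] [Preorder α] {u v : ι × α}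
    (huv : toLex u < toLex v) :
    (hsuCliqueChain ι α).Adj u v ↔ u.1 = v.1 ∨ u.1 ⋖ v.1 ∧ u.2 ≤ v.2 := by
  have hne : u ≠ v := fun h => huv.ne (congrArg toLex h)
  have hcov : ¬ v.1 ⋖ u.1 := fun h => (Prod.Lex.monotone_fst _ _ huv.le).not_gt h.lt
  simp only [hsuCliqueChain, SimpleGraph.fromRel_adj]
  tauto

variable {ι α : Type*} [LinearOrder ι] [LinearOrder α] {A : Set (ι × α)} {u v : ι × α}

theorem nbhds_singleton_inter_compl_subset (hA : IsLowerSet (ofLex ⁻¹' A)) (hu : u ∈ A)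
    (hv : v ∈ A) (huv : u.1 < v.1 ∨ u.1 = v.1 ∧ v.2 ≤ u.2) :
    nbhds (hsuCliqueChain ι α) {u} ∩ Aᶜ ⊆ nbhds (hsuCliqueChain ι α) {v} ∩ Aᶜ := by
  rintro w ⟨hadj, hwA⟩
  have hlt : ∀ x ∈ A, toLex x < toLex w := fun x hx => not_le.1 fun hle => hwA (hA hle hx)
  rw [mem_nbhds_singleton, adj_iff_of_lt (hlt u hu)] at hadj
  refine ⟨?_, hwA⟩
  rw [mem_nbhds_singleton, adj_iff_of_lt (hlt v hv)]
  rcases huv with hlt_fst | ⟨heq_fst, hle_snd⟩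
  · have hvw : v.1 ≤ w.1 := Prod.Lex.monotone_fst _ _ (hlt v hv).le
    have hcov : u.1 ⋖ w.1 := (hadj.resolve_left (hlt_fst.trans_le hvw).ne).1
    exact Or.inl (hvw.eq_of_not_lt (hcov.2 hlt_fst))
  · rw [heq_fst] at hadj
    exact hadj.imp_right fun ⟨hcov, hle⟩ => ⟨hcov, hle_snd.trans hle⟩

theorem nestedCut (hA : IsLowerSet (ofLex ⁻¹' A)) : NestedCut (hsuCliqueChain ι α) A := by
  intro u hu v hv
  rcases lt_trichotomy u.1 v.1 with hlt | heq | hgt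
  · exact Or.inl (nbhds_singleton_inter_compl_subset hA hu hv (Or.inl hlt))
  · exact (le_total v.2 u.2).imp
      (fun hle => nbhds_singleton_inter_compl_subset hA hu hv (Or.inr ⟨heq, hle⟩))
      (fun hle => nbhds_singleton_inter_compl_subset hA hv hu (Or.inr ⟨heq.symm, hle⟩))
  · exact Or.inr (nbhds_singleton_inter_compl_subset hA hv hu (Or.inl hgt))

theorem eq_of_adj_iff {p q : ℕ} {G : SimpleGraph (Fin q × Fin p)}
    (hG : ∀ u v : Fin q × Fin p, u ≠ v → (G.Adj u v ↔
      u.1 = v.1 ∨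
      ((u.1 : ℕ) + 1 = (v.1 : ℕ) ∧ (u.2 : ℕ) ≤ (v.2 : ℕ)) ∨
      ((v.1 : ℕ) + 1 = (u.1 : ℕ) ∧ (v.2 : ℕ) ≤ (u.2 : ℕ)))) :
    G = hsuCliqueChain (Fin q) (Fin p) := by
  ext u v
  by_cases huv : u = v
  · simp [huv]
  · simp only [hG u v huv, hsuCliqueChain, SimpleGraph.fromRel_adj, Fin.covBy_iff,
      Nat.covBy_iff_add_one_eq, Fin.le_def]
    tauto

end hsuCliqueChain

theorem lexLe_iff_toLex_le {p q : ℕ} {u v : Fin q × Fin p} : lexLe u v ↔ toLex u ≤ toLex v := by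
  rw [Prod.Lex.toLex_le_toLex]
  rfl

theorem hsu_clique_chain_cut_nbhds_general {ι α : Type*} [LinearOrder ι] [LinearOrder α]
    {A : Set (ι × α)} (hinit : IsLowerSet (ofLex ⁻¹' A)) (hA : A.Finite) :
    (∀ X ⊆ A, X.Nonempty → ∃ x ∈ X,
        nbhds (hsuCliqueChain ι α) X ∩ Aᶜ = nbhds (hsuCliqueChain ι α) {x} ∩ Aᶜ) ∧
      (cutNbhdFamily (hsuCliqueChain ι α) A).ncard ≤ 1 + A.ncard :=
  have hnested := hsuCliqueChain.nestedCut hinit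
  ⟨fun _ hXA => hnested.exists_nbhds_inter_compl_eq_singleton hXA (hA.subset hXA),
    hnested.ncard_cutNbhdFamily_le hA⟩

theorem hsu_clique_chain_cut_nbhds (p q : ℕ) (hp : 1 ≤ p) (hq : 1 ≤ q)
    (G : SimpleGraph (Fin q × Fin p))
    (hG : ∀ u v : Fin q × Fin p, u ≠ v → (G.Adj u v ↔
      u.1 = v.1 ∨
      ((u.1 : ℕ) + 1 = (v.1 : ℕ) ∧ (u.2 : ℕ) ≤ (v.2 : ℕ)) ∨
      ((v.1 : ℕ) + 1 = (u.1 : ℕ) ∧ (v.2 : ℕ) ≤ (u.2 : ℕ))))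
    (A : Set (Fin q × Fin p)) (hinit : ∀ v ∈ A, ∀ u, lexLe u v → u ∈ A) :
    (∀ X : Set (Fin q × Fin p), X ⊆ A → X.Nonempty →
        ∃ R ⊆ X, R.ncard ≤ 2 ∧ nbhds G X ∩ Aᶜ = nbhds G R ∩ Aᶜ) ∧
      (cutNbhdFamily G A).ncard ≤ 1 + A.ncard + A.ncard * (A.ncard - 1) / 2 := by
  obtain rfl := hsuCliqueChain.eq_of_adj_iff hG
  obtain ⟨hrep, hcard⟩ := hsu_clique_chain_cut_nbhds_general
    (fun v u huv hv => hinit v hv u (lexLe_iff_toLex_le.2 huv)) A.toFinite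
  refine ⟨fun X hXA hne => ?_, le_add_right hcard⟩
  obtain ⟨x, hx, heq⟩ := hrep X hXA hne
  exact ⟨{x}, Set.singleton_subset_iff.2 hx, by simp, heq⟩
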